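/- arXiv:2102.10458 — 2 statements merged into one kernel-verified Lean document; each statement's English description precedes it below -/
import Mathlib

section
/- Let m ≥ n ≥ 1 and let A ∈ ℂ^{m×n} be column-orthonormal, and set K = AAᴴ. Then Σ_{S ⊆ [m], |S| = n} det(K_S) = 1; that is, the principal minors of order n of K form a probability distribution on the n-element subsets of [m]. -/
open Matrix

/-- The principal submatrix of an `m × m` matrix with rows and columns indexed by
a subset `S ⊆ [m]` with `|S| = k`. -/
noncomputable def principalSubmatrix {m k : ℕ} (K : Matrix (Fin m) (Fin m) ℂ)
    (S : Finset (Fin m)) (hS : S.card = k) : Matrix (Fin k) (Fin k) ℂ :=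
  K.submatrix (fun i => ((S.orderIsoOfFin hS i : {x // x ∈ S}) : Fin m))
    (fun i => ((S.orderIsoOfFin hS i : {x // x ∈ S}) : Fin m))

theorem stmt9 (m n : ℕ) (hn : 1 ≤ n) (hmn : n ≤ m)
    (A : Matrix (Fin m) (Fin n) ℂ) (hA : Aᴴ * A = 1) :
    ∑ S : {S : Finset (Fin m) // S.card = n},
        (principalSubmatrix (A * Aᴴ) S.1 S.2).det = 1 := by
  have h1 := Matrix.charpoly_coeff_eq_sum_minors (A * Aᴴ) n (by simpa using hmn)
  have h2 := Matrix.charpoly_mul_comm_of_le A Aᴴ (by simpa using hmn)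
  rw [h2, hA, Matrix.charpoly_one] at h1
  simp only [Fintype.card_fin, Polynomial.coeff_X_pow_mul', le_refl, if_true, Nat.sub_self] at h1
  have h3 : ((Polynomial.X - 1 : Polynomial ℂ) ^ n).coeff 0 = (-1) ^ n := by
    simp [Polynomial.coeff_zero_eq_eval_zero]
  rw [h3] at h1
  have h4 : ((-1 : ℂ)) ^ n ≠ 0 := pow_ne_zero _ (by norm_num)
  have h5 := mul_left_cancel₀ h4 ((mul_one _).trans h1)
  rw [h5]
  symm
  rw [Finset.sum_subtype (p := fun S : Finset (Fin m) => S.card = n) _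
    (fun S => by simp [Finset.mem_powersetCard])]
  refine Finset.sum_congr rfl fun S _ => ?_
  rw [← Matrix.det_submatrix_equiv_self (S.1.orderIsoOfFin S.2).toEquiv]
  rfl
end

section
/- Let m ≥ n ≥ 1, let A ∈ ℂ^{m×n} be column-orthonormal, and set K = AAᴴ. Then for every subset S ⊆ [m] with |S| = k ≤ n, the marginal probability that the modes in S are all occupied equals det(K_S); that is, Σ_{T : S ⊆ T ⊆ [m], |T| = n} det(K_T) = det(K_S). -/
open Matrix

open Polynomial in
theorem aux_cb {R : Type*} [CommRing R] {m n : ℕ} (A : Matrix (Fin m) (Fin n) R)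
    (B : Matrix (Fin n) (Fin m) R) :
    ∑ s ∈ Finset.univ.powersetCard n,
      ((A * B).submatrix (Subtype.val : {x // x ∈ s} → Fin m) Subtype.val).det = (B * A).det := by
  rw [← Matrix.coeff_det_one_add_X_smul_eq_sum_minors (A * B) n]
  have h := Polynomial.coeff_det_X_add_C_card (B * A) (1 : Matrix (Fin n) (Fin n) R)
  rw [Fintype.card_fin] at h
  rw [← h, Matrix.map_mul, Matrix.map_mul, ← Matrix.smul_mul, Matrix.det_one_add_mul_comm,
    Matrix.mul_smul, add_comm]
  simp

theorem aux_psub {m k : ℕ} (K : Matrix (Fin m) (Fin m) ℂ)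
    (S : Finset (Fin m)) (hS : S.card = k) :
    (principalSubmatrix K S hS).det =
      (K.submatrix (Subtype.val : {x // x ∈ S} → Fin m) Subtype.val).det := by
  rw [← Matrix.det_submatrix_equiv_self (S.orderIsoOfFin hS).toEquiv]
  rfl

open Polynomial in
theorem stmt10 (m n k : ℕ) (hn : 1 ≤ n) (hmn : n ≤ m) (hk : k ≤ n)
    (A : Matrix (Fin m) (Fin n) ℂ) (hA : Aᴴ * A = 1)
    (S : Finset (Fin m)) (hS : S.card = k) :
    ∑ T : {T : Finset (Fin m) // S ⊆ T ∧ T.card = n},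
        (principalSubmatrix (A * Aᴴ) T.1 T.2.2).det
      = (principalSubmatrix (A * Aᴴ) S hS).det := by
  classical
  simp_rw [aux_psub]
  let f : Finset (Fin m) → ℂ := fun T =>
    ((A * Aᴴ).submatrix (Subtype.val : {x // x ∈ T} → Fin m) Subtype.val).det
  change ∑ T : {T : Finset (Fin m) // S ⊆ T ∧ T.card = n}, f T.1 = f S
  let z : Fin m → ℂ[X] := fun i => if i ∈ S then X else 1
  have key := aux_cb (Matrix.diagonal z * A.map C) (Aᴴ.map C)
  have hL : ∀ s : Finset (Fin m),
      ((Matrix.diagonal z * A.map C * Aᴴ.map C).submatrix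
        (Subtype.val : {x // x ∈ s} → Fin m) Subtype.val).det = X ^ (s ∩ S).card * C (f s) := by
    intro s
    have h1 : (Matrix.diagonal z * A.map C * Aᴴ.map C).submatrix
        (Subtype.val : {x // x ∈ s} → Fin m) (Subtype.val : {x // x ∈ s} → Fin m) =
        Matrix.diagonal (fun i : {x // x ∈ s} => z i) *
          ((A * Aᴴ).submatrix (Subtype.val : {x // x ∈ s} → Fin m)
            (Subtype.val : {x // x ∈ s} → Fin m)).map C := by
      rw [Matrix.mul_assoc, ← Matrix.map_mul]
      ext1 i j
      simp only [Matrix.submatrix_apply, Matrix.diagonal_mul, Matrix.map_apply]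
    rw [h1, Matrix.det_mul, Matrix.det_diagonal, Finset.prod_coe_sort s z]
    congr 1
    · simp only [z]
      rw [Finset.prod_ite_mem, Finset.prod_const]
    · exact (RingHom.map_det C _).symm
  simp_rw [hL] at key
  let AS : Matrix {x // x ∈ S} (Fin n) ℂ := A.submatrix Subtype.val id
  have hR : Aᴴ.map C * (Matrix.diagonal z * A.map C) =
      1 + ((X - 1 : ℂ[X]) • ASᴴ.map C) * AS.map C := by
    have h1 : (1 : Matrix (Fin n) (Fin n) ℂ[X]) = Aᴴ.map C * A.map C := by
      rw [← Matrix.map_mul, hA]; simp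
    rw [h1]
    ext1 i j
    rw [Matrix.smul_mul, Matrix.mul_apply]
    simp only [Matrix.diagonal_mul]
    simp only [Matrix.mul_apply, Matrix.add_apply, Matrix.smul_apply,
      Matrix.map_apply, Matrix.conjTranspose_apply, AS, Matrix.submatrix_apply, id]
    rw [Finset.sum_coe_sort S (fun l => C (star (A l i)) * C (A l j)), smul_eq_mul,
      Finset.mul_sum, ← Finset.univ_inter S, ← Finset.sum_ite_mem, ← Finset.sum_add_distrib]
    refine Finset.sum_congr rfl fun l _ => ?_
    simp only [z]
    split_ifs <;> ring
  rw [hR, Matrix.det_one_add_mul_comm, Matrix.mul_smul, ← Matrix.map_mul] at key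
  have hc := congrArg (fun p => Polynomial.coeff p k) key
  have hfin : (1 + (X - 1 : ℂ[X]) • (AS * ASᴴ).map C) =
      (X : ℂ[X]) • (AS * ASᴴ).map C + (1 - AS * ASᴴ).map C := by
    generalize AS * ASᴴ = M
    ext1 i j
    simp only [Matrix.add_apply, Matrix.smul_apply, Matrix.map_apply, Matrix.sub_apply,
      Matrix.one_apply, smul_eq_mul, map_sub]
    split_ifs <;> simp <;> ring
  have hcard : Fintype.card {x // x ∈ S} = k := by simp [hS]
  have h3 := Polynomial.coeff_det_X_add_C_card (AS * ASᴴ) (1 - AS * ASᴴ)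
  rw [hcard] at h3
  simp only [hfin, h3, Polynomial.finsetSum_coeff] at hc
  have hfS : (AS * ASᴴ).det = f S := rfl
  rw [← hfS, ← hc]
  rw [← Finset.sum_subtype ((Finset.univ.powersetCard n).filter (fun T => S ⊆ T))
    (by intro T; simp [Finset.mem_powersetCard, and_comm]) f, Finset.sum_filter]
  refine Finset.sum_congr rfl fun T _ => ?_
  rw [mul_comm, Polynomial.coeff_C_mul, Polynomial.coeff_X_pow]
  have : k = (T ∩ S).card ↔ S ⊆ T := by
    rw [← Finset.inter_eq_right ]
    constructor
    · intro h
      exact Finset.eq_of_subset_of_card_le Finset.inter_subset_right (by omega)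
    · intro h; rw [h, hS]
  simp [this]
end
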